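/- If for every multi-index α ∈ {0,1}^d there is a constant c_1 with a(v_α, v_α) ≤ c_1 ⟨L_α v_α, v_α⟩ for all v_α ∈ S_α, then the additive subspace correction smoother L = Σ_{α∈{0,1}^d} Q_α′ L_α Q_α satisfies a(v,v) ≤ c ⟨Lv, v⟩ for all v ∈ S^d, where c depends only on c_1 and d but not on the mesh size h or the spline degree p. -/

import Mathlib

noncomputable section

open MeasureTheory Set

namespace SplineMG

/-- The `j`-th piece of the uniform partition of `[0,1]` into `m` subintervals of
length `h = 1/m`; the first and last pieces are extended to `-∞` resp. `+∞`
(the spline is extended polynomially outside `[0,1]`). -/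
def pieceSet (m j : ℕ) : Set ℝ :=
  (if j = 0 then Iic ((1 : ℝ) / m) else Icc ((j : ℝ) / m) (((j : ℝ) + 1) / m)) ∪
  (if j = m - 1 then Ici (((m : ℝ) - 1) / m) else ∅)

/-- `u : ℝ → ℝ` belongs to the univariate spline space `S` of degree `p` and maximal
smoothness `C^{p-1}` on the uniform partition of `(0,1)` into `m` intervals of
length `h = 1/m`. -/
def IsSpline (m p : ℕ) (u : ℝ → ℝ) : Prop :=
  ContDiffOn ℝ (p - 1 : ℕ) u (Ioo (0 : ℝ) 1) ∧
  ∀ j < m, ∃ q : Polynomial ℝ, q.natDegree ≤ p ∧ ∀ x ∈ pieceSet m j, u x = q.eval x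

/-- `u` belongs to the subspace `S₀` of `S`: all odd derivatives of order `< p`
vanish at both endpoints. -/
def IsSpline0 (m p : ℕ) (u : ℝ → ℝ) : Prop :=
  IsSpline m p u ∧
  ∀ l : ℕ, 2 * l + 1 < p →
    iteratedDeriv (2 * l + 1) u 0 = 0 ∧ iteratedDeriv (2 * l + 1) u 1 = 0

/-- The `L²(0,1)` inner product. -/
def ip0 (u v : ℝ → ℝ) : ℝ := ∫ x in Ioo (0 : ℝ) 1, u x * v x

/-- The squared `L²(0,1)` norm `‖u‖₀²`. -/
def l2normSq (u : ℝ → ℝ) : ℝ := ∫ x in Ioo (0 : ℝ) 1, u x ^ 2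

/-- The `L²(0,1)` norm `‖u‖₀`. -/
def l2norm (u : ℝ → ℝ) : ℝ := Real.sqrt (l2normSq u)

/-- The squared `H¹(0,1)` seminorm `|u|₁²`. -/
def h1semiSq (u : ℝ → ℝ) : ℝ := ∫ x in Ioo (0 : ℝ) 1, deriv u x ^ 2

/-- The `H¹(0,1)` seminorm `|u|₁`. -/
def h1semi (u : ℝ → ℝ) : ℝ := Real.sqrt (h1semiSq u)

/-- The squared full `H¹(0,1)` norm. -/
def h1normSq (u : ℝ → ℝ) : ℝ := l2normSq u + h1semiSq u

/-- `u` belongs to `S₁`, the `L²(0,1)`-orthogonal complement of `S₀` in `S`. -/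
def IsSpline1 (m p : ℕ) (u : ℝ → ℝ) : Prop :=
  IsSpline m p u ∧ ∀ v, IsSpline0 m p v → ip0 u v = 0

/-- `v = Q₀ u` is the `L²(0,1)`-orthogonal projection of `u` onto `S₀`. -/
def IsL2Proj0 (m p : ℕ) (u v : ℝ → ℝ) : Prop :=
  IsSpline0 m p v ∧ ∀ w, IsSpline0 m p w → ip0 (u - v) w = 0

/-- The component predicate: `false ↦ S₀`, `true ↦ S₁`. -/
def IsSplineC (m p : ℕ) : Bool → (ℝ → ℝ) → Prop
  | false => IsSpline0 m p
  | true => IsSpline1 m p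

/-- The tensor-product spline space `S^d = S ⊗ ⋯ ⊗ S` on `(0,1)^d`. -/
def TensorSpline (d m p : ℕ) : Submodule ℝ ((Fin d → ℝ) → ℝ) :=
  Submodule.span ℝ {u | ∃ f : Fin d → ℝ → ℝ, (∀ i, IsSpline m p (f i)) ∧
    u = fun x => ∏ i, f i (x i)}

/-- The subspace `S_α = S_{α₁} ⊗ ⋯ ⊗ S_{α_d}` of `S^d`, for `α ∈ {0,1}^d`
(`false ↦ 0`, `true ↦ 1`). -/
def TensorSplineSub (d m p : ℕ) (α : Fin d → Bool) : Submodule ℝ ((Fin d → ℝ) → ℝ) :=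
  Submodule.span ℝ {u | ∃ f : Fin d → ℝ → ℝ, (∀ i, IsSplineC m p (α i) (f i)) ∧
    u = fun x => ∏ i, f i (x i)}

/-- The open unit cube `Ω = (0,1)^d`. -/
def cube (d : ℕ) : Set (Fin d → ℝ) := Set.univ.pi fun _ => Ioo (0 : ℝ) 1

/-- The `i`-th partial derivative. -/
def pd (d : ℕ) (i : Fin d) (u : (Fin d → ℝ) → ℝ) : (Fin d → ℝ) → ℝ :=
  fun x => deriv (fun t => u (Function.update x i t)) (x i)

/-- The `L²(Ω)` inner product on the unit cube. -/
def ipd (d : ℕ) (u v : (Fin d → ℝ) → ℝ) : ℝ := ∫ x in cube d, u x * v x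

/-- The squared `L²(Ω)` norm. -/
def l2normSqD (d : ℕ) (u : (Fin d → ℝ) → ℝ) : ℝ := ∫ x in cube d, u x ^ 2

/-- The bilinear form `a(u,v) = ∫_Ω (∇u·∇v + uv) dx`. -/
def aForm (d : ℕ) (u v : (Fin d → ℝ) → ℝ) : ℝ :=
  ∫ x in cube d, (∑ i, pd d i u x * pd d i v x) + u x * v x

/-- The squared `H¹(Ω)` seminorm. -/
def h1semiSqD (d : ℕ) (u : (Fin d → ℝ) → ℝ) : ℝ :=
  ∫ x in cube d, ∑ i, pd d i u x ^ 2

/-- The squared full `H¹(Ω)` norm. -/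
def h1normSqD (d : ℕ) (u : (Fin d → ℝ) → ℝ) : ℝ := l2normSqD d u + h1semiSqD d u

/-- `v = Q_α u` is the `L²(Ω)`-orthogonal projection of `u` onto `S_α`. -/
def IsL2ProjSub (d m p : ℕ) (α : Fin d → Bool) (u v : (Fin d → ℝ) → ℝ) : Prop :=
  v ∈ TensorSplineSub d m p α ∧ ∀ w ∈ TensorSplineSub d m p α, ipd d (u - v) w = 0

/-- The coarse tensor-product spline space `(S_c)^d` (with `m/2` knot spans of
width `2h` per direction). -/
def TensorSplineCoarse (d m p : ℕ) : Submodule ℝ ((Fin d → ℝ) → ℝ) :=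
  TensorSpline d (m / 2) p

/-- `v = T_c u` is the `a(·,·)`-orthogonal (Galerkin) projection of `u` onto `(S_c)^d`. -/
def IsGalerkinCoarseProj (d m p : ℕ) (u v : (Fin d → ℝ) → ℝ) : Prop :=
  v ∈ TensorSplineCoarse d m p ∧ ∀ w ∈ TensorSplineCoarse d m p, aForm d (u - v) w = 0

end SplineMG

namespace SplineMG

/-! Summing the univariate splitting `S = S₀ + S₁` over all tensor factors shows that the spaces
`S_α` span `S^d`, and they are pairwise `L²`-orthogonal because the integral of a product of
tensors factorises. Hence the residual `v - ∑ Q_α v` is orthogonal to all of `S^d`, in particular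
to itself, and `v = ∑ Q_α v` on the cube. The quadratic form `a` of a sum of `N` functions is at
most `N` times the sum of the values of `a`, by the Cauchy-Schwarz inequality under the integral;
with `N = 2^d` this gives the constant `2^d * c₁`. -/

section SquareIntegrable

variable {X : Type*} [MeasurableSpace X]

/-- The orthogonal complement of the function `r` with respect to the `L²(μ)` pairing. Integrability
of the product is part of membership, because the integral of a non-integrable function is `0`. -/
def l2Orthogonal (μ : Measure X) (r : X → ℝ) : Submodule ℝ (X → ℝ) where
  carrier := {z | Integrable (fun x => r x * z x) μ ∧ ∫ x, r x * z x ∂μ = 0}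
  zero_mem' := by simp
  add_mem' := by
    rintro y z ⟨hy, hy₀⟩ ⟨hz, hz₀⟩
    simp only [mem_ofPred_eq, Pi.add_apply, mul_add]
    exact ⟨hy.add hz, by rw [integral_add hy hz, hy₀, hz₀, add_zero]⟩
  smul_mem' := by
    rintro c z ⟨hz, hz₀⟩
    simp only [mem_ofPred_eq, Pi.smul_apply, smul_eq_mul, mul_left_comm _ c]
    exact ⟨hz.const_mul c, by rw [integral_const_mul, hz₀, mul_zero]⟩

lemma mem_l2Orthogonal_comm {μ : Measure X} {r z : X → ℝ} :
    z ∈ l2Orthogonal μ r ↔ r ∈ l2Orthogonal μ z := by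
  simp only [l2Orthogonal, Submodule.mem_mk, AddSubmonoid.mem_mk, AddSubsemigroup.mem_mk,
    mem_ofPred_eq, mul_comm]

lemma exists_mem_forall_integral_sub_mul_eq_zero {μ : Measure X} (W : Submodule ℝ (X → ℝ))
    [FiniteDimensional ℝ W] (hW : ∀ w ∈ W, MemLp w 2 μ) {u : X → ℝ} (hu : MemLp u 2 μ) :
    ∃ w ∈ W, ∀ v ∈ W, ∫ x, (u - w) x * v x ∂μ = 0 := by
  let T : W →ₗ[ℝ] Lp ℝ 2 μ :=
    { toFun := fun w => (hW w w.2).toLp w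
      map_add' := fun _ _ => rfl
      map_smul' := fun _ _ => rfl }
  obtain ⟨_, ⟨w, rfl⟩, z, hz, huz⟩ :=
    (LinearMap.range T).exists_add_mem_mem_orthogonal (hu.toLp u)
  have hsub : MemLp (u - (w : X → ℝ)) 2 μ := hu.sub (hW w w.2)
  have hz_eq : hsub.toLp _ = z := by
    rw [MemLp.toLp_sub hu (hW w w.2), huz]
    exact add_sub_cancel_left _ _
  refine ⟨w, w.2, fun v hv => ?_⟩
  calc ∫ x, (u - w) x * v x ∂μ = inner ℝ ((hW v hv).toLp v) (hsub.toLp _) := by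
        rw [L2.inner_def]
        refine integral_congr_ae ?_
        filter_upwards [hsub.coeFn_toLp, (hW v hv).coeFn_toLp] with x hux hvx
        rw [hux, hvx]
        rfl
    _ = 0 := by rw [hz_eq]; exact hz _ ⟨⟨v, hv⟩, rfl⟩

lemma memLp_restrict_of_continuous {Y : Type*} [PseudoMetricSpace Y] [ProperSpace Y]
    [MeasurableSpace Y] [OpensMeasurableSpace Y] {μ : Measure Y} [IsFiniteMeasureOnCompacts μ]
    {f : Y → ℝ} (hf : Continuous f) {s : Set Y} (hs : Bornology.IsBounded s) (p : ENNReal) :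
    MemLp f p (μ.restrict s) := by
  have hK : IsCompact (closure s) := hs.isCompact_closure
  obtain ⟨C, hC⟩ := hK.exists_bound_of_continuousOn hf.continuousOn
  have : IsFiniteMeasure (μ.restrict (closure s)) := ⟨by simpa using hK.measure_lt_top⟩
  have hf_closure : MemLp f p (μ.restrict (closure s)) :=
    .of_bound hf.aestronglyMeasurable C <|
      (ae_restrict_mem isClosed_closure.measurableSet).mono hC
  exact hf_closure.mono_measure (Measure.restrict_mono_set μ subset_closure)

lemma eqOn_zero_of_self_mem_l2Orthogonal {Y : Type*} [TopologicalSpace Y] [MeasurableSpace Y]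
    [OpensMeasurableSpace Y] {μ : Measure Y} [μ.IsOpenPosMeasure] {U : Set Y} (hU : IsOpen U)
    {r : Y → ℝ} (hr : ContinuousOn r U) (h : r ∈ l2Orthogonal (μ.restrict U) r) :
    EqOn r 0 U := by
  have hae : (fun x => r x * r x) =ᵐ[μ.restrict U] 0 :=
    (integral_eq_zero_iff_of_nonneg (fun x => mul_self_nonneg (r x)) h.1).1 h.2
  exact fun x hx => mul_self_eq_zero.1
    (Measure.eqOn_open_of_ae_eq hae hU (hr.mul hr) continuousOn_const hx)

variable {ι : Type*} [Fintype ι] {Y : ι → Type*} [∀ i, MeasurableSpace (Y i)]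
  {μ : ∀ i, Measure (Y i)} [∀ i, SigmaFinite (μ i)]

lemma memLp_two_prod_eval {f : ∀ i, Y i → ℝ} (hf : ∀ i, MemLp (f i) 2 (μ i)) :
    MemLp (fun x : ∀ i, Y i => ∏ i, f i (x i)) 2 (Measure.pi μ) := by
  have hmeas : AEStronglyMeasurable (fun x : ∀ i, Y i => ∏ i, f i (x i)) (Measure.pi μ) :=
    Finset.aestronglyMeasurable_fun_prod _ fun i _ =>
      (hf i).1.comp_quasiMeasurePreserving (Measure.quasiMeasurePreserving_eval μ i)
  rw [memLp_two_iff_integrable_sq hmeas]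
  simp only [← Finset.prod_pow]
  exact Integrable.fintype_prod_dep fun i => (hf i).integrable_sq

lemma prod_eval_mem_l2Orthogonal {f g : ∀ i, Y i → ℝ} (hf : ∀ i, MemLp (f i) 2 (μ i))
    (hg : ∀ i, MemLp (g i) 2 (μ i)) {i : ι} (hfg : ∫ t, f i t * g i t ∂μ i = 0) :
    (fun x : ∀ i, Y i => ∏ i, g i (x i)) ∈
      l2Orthogonal (Measure.pi μ) fun x => ∏ i, f i (x i) := by
  refine ⟨(memLp_two_prod_eval hf).integrable_mul (memLp_two_prod_eval hg), ?_⟩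
  simp only [← Finset.prod_mul_distrib]
  rw [integral_fintype_prod_eq_prod (f := fun i t => f i t * g i t)]
  exact Finset.prod_eq_zero (Finset.mem_univ i) hfg

end SquareIntegrable

section Pieces

lemma isClosed_pieceSet (m j : ℕ) : IsClosed (pieceSet m j) := by
  unfold pieceSet
  split_ifs
  exacts [isClosed_Iic.union isClosed_Ici, isClosed_Iic.union isClosed_empty,
    isClosed_Icc.union isClosed_Ici, isClosed_Icc.union isClosed_empty]

lemma volume_frontier_pieceSet (m j : ℕ) : volume (frontier (pieceSet m j)) = 0 := by
  have hunion : ∀ {s t : Set ℝ}, Convex ℝ s → Convex ℝ t → volume (frontier (s ∪ t)) = 0 := by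
    intro s t hs ht
    refine measure_mono_null ((frontier_union_subset s t).trans
      (union_subset_union inter_subset_left inter_subset_right)) ?_
    exact measure_union_null (hs.addHaar_frontier volume) (ht.addHaar_frontier volume)
  unfold pieceSet
  split_ifs
  exacts [hunion (convex_Iic _) (convex_Ici _), hunion (convex_Iic _) convex_empty,
    hunion (convex_Icc _ _) (convex_Ici _), hunion (convex_Icc _ _) convex_empty]

variable {m : ℕ}

lemma exists_mem_pieceSet (hm : 1 ≤ m) (x : ℝ) : ∃ j < m, x ∈ pieceSet m j := by
  have hm₀ : (0 : ℝ) < m := by exact_mod_cast hm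
  rcases le_or_gt x (1 / m) with hleft | hleft
  · exact ⟨0, hm, Or.inl (by simpa using hleft)⟩
  rcases le_or_gt (((m : ℝ) - 1) / m) x with hright | hright
  · exact ⟨m - 1, by omega, Or.inr (by simpa using hright)⟩
  have hx : 0 < x := lt_trans (by positivity) hleft
  rw [div_lt_iff₀ hm₀] at hleft
  rw [lt_div_iff₀ hm₀] at hright
  have hfloor_pos : 0 < ⌊x * m⌋₊ := Nat.floor_pos.2 hleft.le
  refine ⟨⌊x * m⌋₊, (Nat.floor_lt (by positivity)).2 (by linarith), Or.inl ?_⟩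
  rw [if_neg hfloor_pos.ne', mem_Icc, div_le_iff₀ hm₀, le_div_iff₀ hm₀]
  exact ⟨Nat.floor_le (by positivity), (Nat.lt_floor_add_one _).le⟩

lemma ae_exists_pieceSet_mem_nhds (hm : 1 ≤ m) : ∀ᵐ x : ℝ, ∃ j < m, pieceSet m j ∈ nhds x := by
  have hfrontier : ∀ᵐ x : ℝ, ∀ j, x ∉ frontier (pieceSet m j) :=
    ae_all_iff.2 fun j => measure_eq_zero_iff_ae_notMem.1 (volume_frontier_pieceSet m j)
  filter_upwards [hfrontier] with x hx
  obtain ⟨j, hj, hxj⟩ := exists_mem_pieceSet hm x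
  refine ⟨j, hj, mem_interior_iff_mem_nhds.1 ?_⟩
  rw [← self_sdiff_frontier]
  exact ⟨hxj, hx j⟩

lemma pieceSet_zero_mem_nhds_zero (hm : 1 ≤ m) : pieceSet m 0 ∈ nhds (0 : ℝ) := by
  have hm₀ : (0 : ℝ) < m := by exact_mod_cast hm
  refine Filter.mem_of_superset (Iic_mem_nhds (one_div_pos.2 hm₀)) ?_
  simp [pieceSet]

lemma pieceSet_pred_mem_nhds_one (hm : 1 ≤ m) : pieceSet m (m - 1) ∈ nhds (1 : ℝ) := by
  have hm₀ : (0 : ℝ) < m := by exact_mod_cast hm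
  have hlast : ((m : ℝ) - 1) / m < 1 := by rw [div_lt_one hm₀]; linarith
  refine Filter.mem_of_superset (Ici_mem_nhds hlast) ?_
  simp [pieceSet]

end Pieces

section UnivariateSplines

variable {m p : ℕ}

namespace IsSpline

variable {u : ℝ → ℝ}

lemma contDiffAt {j : ℕ} (hu : IsSpline m p u) (hj : j < m) {x : ℝ}
    (hx : pieceSet m j ∈ nhds x) (n : WithTop ℕ∞) : ContDiffAt ℝ n u x := by
  obtain ⟨q, -, hq⟩ := hu.2 j hj
  have huq : u =ᶠ[nhds x] fun y => q.aeval y := Filter.mem_of_superset hx fun y hy => by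
    simpa using hq y hy
  exact (q.contDiff_aeval (𝕜 := ℝ) n).contDiffAt.congr_of_eventuallyEq huq

lemma continuous (hm : 1 ≤ m) (hu : IsSpline m p u) : Continuous u := by
  have hfin : LocallyFinite fun j : Fin m => pieceSet m j := locallyFinite_of_finite _
  refine hfin.continuous (eq_univ_of_forall fun x => ?_) (fun j => isClosed_pieceSet m j) ?_
  · obtain ⟨j, hj, hx⟩ := exists_mem_pieceSet hm x
    exact mem_iUnion.2 ⟨⟨j, hj⟩, hx⟩
  · intro j
    obtain ⟨q, -, hq⟩ := hu.2 j j.2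
    exact q.continuous.continuousOn.congr hq

lemma memLp (hm : 1 ≤ m) (hu : IsSpline m p u) : MemLp u 2 (volume.restrict (Ioo 0 1)) :=
  memLp_restrict_of_continuous (hu.continuous hm) (Metric.isBounded_Ioo 0 1) 2

lemma ae_differentiableAt (hm : 1 ≤ m) (hu : IsSpline m p u) :
    ∀ᵐ x : ℝ, DifferentiableAt ℝ u x := by
  filter_upwards [ae_exists_pieceSet_mem_nhds hm] with x ⟨j, hj, hx⟩
  exact (hu.contDiffAt hj hx 1).differentiableAt one_ne_zero

lemma memLp_deriv (hm : 1 ≤ m) (hu : IsSpline m p u) :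
    MemLp (deriv u) 2 (volume.restrict (Ioo 0 1)) := by
  choose q _ hq using fun j : Fin m => hu.2 j j.2
  have hbound : ∀ᵐ x : ℝ, ‖deriv u x‖ ≤ ∑ j, |(q j).derivative.eval x| := by
    filter_upwards [ae_exists_pieceSet_mem_nhds hm] with x ⟨j, hj, hx⟩
    have huq : u =ᶠ[nhds x] fun y => (q ⟨j, hj⟩).eval y := Filter.mem_of_superset hx (hq ⟨j, hj⟩)
    rw [huq.deriv_eq, Polynomial.deriv, Real.norm_eq_abs]
    exact Finset.single_le_sum (f := fun j => |(q j).derivative.eval x|)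
      (fun _ _ => abs_nonneg _) (Finset.mem_univ _)
  have hcont : Continuous fun x => ∑ j, |(q j).derivative.eval x| :=
    continuous_finsetSum _ fun j _ => (q j).derivative.continuous.abs
  exact (memLp_restrict_of_continuous hcont (Metric.isBounded_Ioo 0 1) 2).mono'
    (measurable_deriv u).aestronglyMeasurable (ae_restrict_of_ae hbound)

end IsSpline

/-- The univariate spline space `S` as a subspace of the functions on `ℝ`. -/
def splineSpace (m p : ℕ) : Submodule ℝ (ℝ → ℝ) where
  carrier := {u | IsSpline m p u}
  zero_mem' := ⟨contDiffOn_const, fun _ _ => ⟨0, by simp, by simp⟩⟩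
  add_mem' := by
    rintro u v ⟨hu, hu_poly⟩ ⟨hv, hv_poly⟩
    refine ⟨hu.add hv, fun j hj => ?_⟩
    obtain ⟨q, hq_deg, hq⟩ := hu_poly j hj
    obtain ⟨r, hr_deg, hr⟩ := hv_poly j hj
    exact ⟨q + r, Polynomial.natDegree_add_le_of_degree_le hq_deg hr_deg,
      fun x hx => by simp [hq x hx, hr x hx]⟩
  smul_mem' := by
    rintro c u ⟨hu, hu_poly⟩
    refine ⟨contDiffOn_const.smul hu, fun j hj => ?_⟩
    obtain ⟨q, hq_deg, hq⟩ := hu_poly j hj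
    exact ⟨c • q, (Polynomial.natDegree_smul_le c q).trans hq_deg, fun x hx => by simp [hq x hx]⟩

/-- The subspace `S₀` of the univariate spline space. The derivative conditions are additive
only because splines are smooth at the endpoints, which is where `1 ≤ m` enters. -/
def splineSpace0 (m p : ℕ) (hm : 1 ≤ m) : Submodule ℝ (ℝ → ℝ) where
  carrier := {u | IsSpline0 m p u}
  zero_mem' := ⟨(splineSpace m p).zero_mem,
    fun _ _ => ⟨iteratedDeriv_const_zero, iteratedDeriv_const_zero⟩⟩
  add_mem' := by
    rintro u v ⟨hu, hu_odd⟩ ⟨hv, hv_odd⟩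
    have h0 := pieceSet_zero_mem_nhds_zero hm
    have h1 := pieceSet_pred_mem_nhds_one hm
    refine ⟨(splineSpace m p).add_mem hu hv, fun l hl => ⟨?_, ?_⟩⟩
    · rw [iteratedDeriv_add (hu.contDiffAt hm h0 _) (hv.contDiffAt hm h0 _),
        (hu_odd l hl).1, (hv_odd l hl).1, add_zero]
    · rw [iteratedDeriv_add (hu.contDiffAt (by omega) h1 _) (hv.contDiffAt (by omega) h1 _),
        (hu_odd l hl).2, (hv_odd l hl).2, add_zero]
  smul_mem' := by
    rintro c u ⟨hu, hu_odd⟩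
    refine ⟨(splineSpace m p).smul_mem c hu, fun l hl => ⟨?_, ?_⟩⟩
    · rw [iteratedDeriv_const_smul_field, (hu_odd l hl).1, smul_zero]
    · rw [iteratedDeriv_const_smul_field, (hu_odd l hl).2, smul_zero]

lemma finiteDimensional_splineSpace (hm : 1 ≤ m) (p : ℕ) :
    FiniteDimensional ℝ (splineSpace m p) := by
  have : FiniteDimensional ℝ (Polynomial.degreeLT ℝ (p + 1)) :=
    (Polynomial.degreeLTEquiv ℝ (p + 1)).symm.finiteDimensional
  choose idx idx_lt mem_piece using exists_mem_pieceSet hm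
  let glue : (Fin m → Polynomial.degreeLT ℝ (p + 1)) →ₗ[ℝ] ℝ → ℝ :=
    LinearMap.pi fun x => Polynomial.leval x ∘ₗ Submodule.subtype _ ∘ₗ
      LinearMap.proj ⟨idx x, idx_lt x⟩
  refine Submodule.finiteDimensional_of_le (S₂ := LinearMap.range glue) fun u hu => ?_
  choose q hq_deg hq using fun j : Fin m => hu.2 j j.2
  have hq_mem : ∀ j, q j ∈ Polynomial.degreeLT ℝ (p + 1) := fun j => by
    rw [Polynomial.mem_degreeLT]
    exact Polynomial.degree_le_natDegree.trans_lt (by exact_mod_cast Nat.lt_succ_of_le (hq_deg j))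
  exact ⟨fun j => ⟨q j, hq_mem j⟩, funext fun x => (hq _ x (mem_piece x)).symm⟩

lemma IsSplineC.isSpline {a : Bool} {u : ℝ → ℝ} (hu : IsSplineC m p a u) : IsSpline m p u := by
  cases a <;> exact hu.1

lemma IsSplineC.ip0_eq_zero {a b : Bool} {u v : ℝ → ℝ} (hu : IsSplineC m p a u)
    (hv : IsSplineC m p b v) (hab : a ≠ b) : ip0 u v = 0 := by
  have ip0_comm : ip0 u v = ip0 v u := by simp only [ip0, mul_comm]
  cases a <;> cases b
  · exact absurd rfl hab
  · exact ip0_comm.trans (hv.2 u hu)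
  · exact hu.2 v hv
  · exact absurd rfl hab

lemma IsSpline.exists_isSplineC_sum_eq (hm : 1 ≤ m) {u : ℝ → ℝ} (hu : IsSpline m p u) :
    ∃ f : Bool → ℝ → ℝ, (∀ a, IsSplineC m p a (f a)) ∧ ∑ a, f a = u := by
  have : FiniteDimensional ℝ (splineSpace m p) := finiteDimensional_splineSpace hm p
  have : FiniteDimensional ℝ (splineSpace0 m p hm) :=
    Submodule.finiteDimensional_of_le (S₂ := splineSpace m p) fun _ hw => hw.1
  obtain ⟨w, hw, horth⟩ := exists_mem_forall_integral_sub_mul_eq_zero (splineSpace0 m p hm)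
    (fun w hw => hw.1.memLp hm) (hu.memLp hm)
  refine ⟨fun a => bif a then u - w else w, ?_, by simp⟩
  rintro (_ | _)
  · exact hw
  · exact ⟨(splineSpace m p).sub_mem hu hw.1, horth⟩

end UnivariateSplines

section Cube

variable {d : ℕ}

lemma isOpen_cube (d : ℕ) : IsOpen (cube d) :=
  isOpen_set_pi finite_univ fun _ _ => isOpen_Ioo

lemma volume_restrict_cube (d : ℕ) :
    volume.restrict (cube d) = Measure.pi fun _ => volume.restrict (Ioo (0 : ℝ) 1) := by
  rw [volume_pi, cube, Measure.restrict_pi_pi]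

lemma pd_congr {u v : (Fin d → ℝ) → ℝ} (huv : EqOn u v (cube d)) (i : Fin d) :
    EqOn (pd d i u) (pd d i v) (cube d) := by
  intro x hx
  have hcont : ContinuousAt (fun t => Function.update x i t) (x i) :=
    (continuous_const.update i continuous_id).continuousAt
  have hcube : cube d ∈ nhds (Function.update x i (x i)) := by
    rw [Function.update_eq_self]
    exact (isOpen_cube d).mem_nhds hx
  exact Filter.EventuallyEq.deriv_eq <| Filter.mem_of_superset (hcont hcube) fun _ ht => huv ht

lemma aForm_congr {u u' v v' : (Fin d → ℝ) → ℝ} (hu : EqOn u u' (cube d))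
    (hv : EqOn v v' (cube d)) : aForm d u v = aForm d u' v' := by
  refine setIntegral_congr_fun (isOpen_cube d).measurableSet fun x hx => ?_
  simp only [hu hx, hv hx, pd_congr hu _ hx, pd_congr hv _ hx]

/-- The functions on the cube that have partial derivatives almost everywhere and are
square-integrable together with them: enough of `H¹(Ω)` for `aForm` to be finite and additive.
The derivatives are the pointwise ones of `pd`, not weak ones. -/
def classicalH1 (d : ℕ) : Submodule ℝ ((Fin d → ℝ) → ℝ) where
  carrier := {u | MemLp u 2 (volume.restrict (cube d)) ∧ ∀ i,
    (∀ᵐ x ∂volume.restrict (cube d),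
      DifferentiableAt ℝ (fun t => u (Function.update x i t)) (x i)) ∧
    MemLp (pd d i u) 2 (volume.restrict (cube d))}
  zero_mem' := by
    have pd_zero : ∀ i, pd d i 0 = 0 := fun i => funext fun x => by simp [pd]
    simp [pd_zero]
  add_mem' := by
    rintro u v ⟨hu, hu_pd⟩ ⟨hv, hv_pd⟩
    refine ⟨hu.add hv, fun i => ⟨?_, ?_⟩⟩
    · filter_upwards [(hu_pd i).1, (hv_pd i).1] with x hux hvx using hux.add hvx
    · refine ((hu_pd i).2.add (hv_pd i).2).ae_eq ?_
      filter_upwards [(hu_pd i).1, (hv_pd i).1] with x hux hvx using (deriv_add hux hvx).symm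
  smul_mem' := by
    rintro c u ⟨hu, hu_pd⟩
    have pd_smul : ∀ i, pd d i (c • u) = c • pd d i u := fun i =>
      funext fun x => deriv_const_mul_field (v := fun t => u (Function.update x i t)) c
    refine ⟨hu.const_smul c, fun i => ⟨?_, ?_⟩⟩
    · filter_upwards [(hu_pd i).1] with x hux using hux.const_smul c
    · exact pd_smul i ▸ (hu_pd i).2.const_smul c

lemma ae_pd_sum {ι : Type*} [Fintype ι] {u : ι → (Fin d → ℝ) → ℝ}
    (hu : ∀ k, u k ∈ classicalH1 d) :
    ∀ᵐ x ∂volume.restrict (cube d), ∀ i, pd d i (∑ k, u k) x = ∑ k, pd d i (u k) x := by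
  have hdiff : ∀ᵐ x ∂volume.restrict (cube d), ∀ i k,
      DifferentiableAt ℝ (fun t => u k (Function.update x i t)) (x i) :=
    ae_all_iff.2 fun i => ae_all_iff.2 fun k => ((hu k).2 i).1
  filter_upwards [hdiff] with x hx i
  simp only [pd, Finset.sum_apply]
  exact deriv_fun_sum fun k _ => hx i k

lemma integrable_aForm_integrand {u : (Fin d → ℝ) → ℝ} (hu : u ∈ classicalH1 d) :
    Integrable (fun x => (∑ i, pd d i u x * pd d i u x) + u x * u x)
      (volume.restrict (cube d)) :=
  (integrable_finsetSum _ fun i _ => (hu.2 i).2.integrable_mul (hu.2 i).2).add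
    (hu.1.integrable_mul hu.1)

theorem aForm_sum_le_card_mul_sum {ι : Type*} [Fintype ι] {u : ι → (Fin d → ℝ) → ℝ}
    (hu : ∀ k, u k ∈ classicalH1 d) :
    aForm d (∑ k, u k) (∑ k, u k) ≤ Fintype.card ι * ∑ k, aForm d (u k) (u k) := by
  have cauchy_schwarz (g : ι → ℝ) :
      (∑ k, g k) * (∑ k, g k) ≤ Fintype.card ι * ∑ k, g k * g k := by
    simpa only [sq, Finset.card_univ] using sq_sum_le_card_mul_sum_sq (s := Finset.univ) (f := g)
  have hint : ∀ k ∈ Finset.univ, Integrable (fun x => (∑ i, pd d i (u k) x * pd d i (u k) x) +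
      u k x * u k x) (volume.restrict (cube d)) := fun k _ => integrable_aForm_integrand (hu k)
  unfold aForm
  rw [← integral_finsetSum _ hint, ← integral_const_mul]
  refine integral_mono_ae (integrable_aForm_integrand (Submodule.sum_mem _ fun k _ => hu k))
    ((integrable_finsetSum _ hint).const_mul _) ?_
  filter_upwards [ae_pd_sum hu] with x hx
  simp only [hx, Finset.sum_apply]
  rw [Finset.sum_add_distrib, mul_add, Finset.sum_comm,
    Finset.mul_sum (Finset.univ : Finset (Fin d))]
  exact add_le_add (Finset.sum_le_sum fun i _ => cauchy_schwarz _) (cauchy_schwarz _)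

lemma prod_update_eval {ι X M : Type*} [Fintype ι] [DecidableEq ι] [CommMonoid M]
    (f : ι → X → M) (i : ι) (x : ι → X) (t : X) :
    ∏ j, f j (Function.update x i t j) = f i t * ∏ j ∈ Finset.univ.erase i, f j (x j) := by
  rw [← Finset.mul_prod_erase _ _ (Finset.mem_univ i), Function.update_self]
  congr 1
  exact Finset.prod_congr rfl fun j hj => by
    rw [Function.update_of_ne (Finset.ne_of_mem_erase hj)]

lemma pd_prod_eval (f : Fin d → ℝ → ℝ) (i : Fin d) :
    pd d i (fun x => ∏ j, f j (x j)) =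
      fun x => ∏ j, Function.update f i (deriv (f i)) j (x j) := by
  funext x
  simp only [pd, prod_update_eval]
  rw [deriv_mul_const_field, ← Finset.mul_prod_erase _ _ (Finset.mem_univ i), Function.update_self]
  congr 1
  exact Finset.prod_congr rfl fun j hj => by
    rw [Function.update_of_ne (Finset.ne_of_mem_erase hj)]

lemma prod_eval_mem_classicalH1 {f : Fin d → ℝ → ℝ}
    (hf : ∀ i, MemLp (f i) 2 (volume.restrict (Ioo 0 1)))
    (hf_diff : ∀ i, ∀ᵐ t ∂volume.restrict (Ioo 0 1), DifferentiableAt ℝ (f i) t)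
    (hf_deriv : ∀ i, MemLp (deriv (f i)) 2 (volume.restrict (Ioo 0 1))) :
    (fun x => ∏ i, f i (x i)) ∈ classicalH1 d := by
  refine ⟨?_, fun i => ⟨?_, ?_⟩⟩
  · rw [volume_restrict_cube]
    exact memLp_two_prod_eval hf
  · rw [volume_restrict_cube]
    filter_upwards [(Measure.quasiMeasurePreserving_eval _ i).ae (hf_diff i)] with x hx
    simp only [prod_update_eval]
    exact hx.mul_const _
  · rw [pd_prod_eval, volume_restrict_cube]
    refine memLp_two_prod_eval fun j => ?_
    rcases eq_or_ne j i with rfl | hji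
    · simpa only [Function.update_self] using hf_deriv j
    · simpa only [Function.update_of_ne hji] using hf j

end Cube

section TensorSplines

variable {d m p : ℕ}

lemma tensorSplineSub_le_tensorSpline (α : Fin d → Bool) :
    TensorSplineSub d m p α ≤ TensorSpline d m p := by
  refine Submodule.span_mono ?_
  rintro _ ⟨f, hf, rfl⟩
  exact ⟨f, fun i => (hf i).isSpline, rfl⟩

lemma continuous_of_mem_tensorSpline (hm : 1 ≤ m) {u : (Fin d → ℝ) → ℝ}
    (hu : u ∈ TensorSpline d m p) : Continuous u := by
  refine Submodule.span_induction ?_ continuous_const (fun _ _ _ _ => Continuous.add)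
    (fun c _ _ hu => hu.const_smul c) hu
  rintro _ ⟨f, hf, rfl⟩
  exact continuous_finsetProd _ fun i _ => ((hf i).continuous hm).comp (continuous_apply i)

lemma tensorSpline_le_classicalH1 (hm : 1 ≤ m) : TensorSpline d m p ≤ classicalH1 d := by
  refine Submodule.span_le.2 ?_
  rintro _ ⟨f, hf, rfl⟩
  exact prod_eval_mem_classicalH1 (fun i => (hf i).memLp hm)
    (fun i => ae_restrict_of_ae ((hf i).ae_differentiableAt hm)) fun i => (hf i).memLp_deriv hm

lemma tensorSpline_le_iSup_tensorSplineSub (hm : 1 ≤ m) :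
    TensorSpline d m p ≤ ⨆ α, TensorSplineSub d m p α := by
  refine Submodule.span_le.2 ?_
  rintro _ ⟨f, hf, rfl⟩
  choose g hg hgf using fun i => (hf i).exists_isSplineC_sum_eq hm
  have hexpand : (fun x : Fin d → ℝ => ∏ i, f i (x i)) =
      ∑ α : Fin d → Bool, fun x => ∏ i, g i (α i) (x i) := by
    funext x
    simp only [← hgf, Finset.sum_apply]
    exact Fintype.prod_sum fun i a => g i a (x i)
  rw [hexpand]
  exact Submodule.sum_mem _ fun α _ => Submodule.mem_iSup_of_mem α <|
    Submodule.subset_span ⟨fun i => g i (α i), fun i => hg i (α i), rfl⟩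

lemma tensorSplineSub_le_l2Orthogonal (hm : 1 ≤ m) {α β : Fin d → Bool} (hαβ : α ≠ β)
    {u : (Fin d → ℝ) → ℝ} (hu : u ∈ TensorSplineSub d m p α) :
    TensorSplineSub d m p β ≤ l2Orthogonal (volume.restrict (cube d)) u := by
  refine Submodule.span_le.2 ?_
  rintro _ ⟨g, hg, rfl⟩
  refine mem_l2Orthogonal_comm.1 (Submodule.span_le.2 ?_ hu)
  rintro _ ⟨f, hf, rfl⟩
  obtain ⟨i, hi⟩ := Function.ne_iff.1 hαβ
  rw [volume_restrict_cube]
  exact prod_eval_mem_l2Orthogonal (fun i => (hg i).isSpline.memLp hm)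
    (fun i => (hf i).isSpline.memLp hm) ((hg i).ip0_eq_zero (hf i) hi.symm)

lemma IsL2ProjSub.mem_l2Orthogonal_sub (hm : 1 ≤ m) {α : Fin d → Bool} {v w z : (Fin d → ℝ) → ℝ}
    (hv : v ∈ TensorSpline d m p) (hw : IsL2ProjSub d m p α v w)
    (hz : z ∈ TensorSplineSub d m p α) :
    z ∈ l2Orthogonal (volume.restrict (cube d)) (v - w) := by
  have hsub : v - w ∈ TensorSpline d m p :=
    Submodule.sub_mem _ hv (tensorSplineSub_le_tensorSpline α hw.1)
  exact ⟨(tensorSpline_le_classicalH1 hm hsub).1.integrable_mul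
    (tensorSpline_le_classicalH1 hm (tensorSplineSub_le_tensorSpline α hz)).1, hw.2 z hz⟩

variable {v : (Fin d → ℝ) → ℝ} {w : (Fin d → Bool) → (Fin d → ℝ) → ℝ}

lemma tensorSpline_le_l2Orthogonal_sub_sum_proj (hm : 1 ≤ m)
    (hv : v ∈ TensorSpline d m p) (hw : ∀ α, IsL2ProjSub d m p α v (w α)) :
    TensorSpline d m p ≤ l2Orthogonal (volume.restrict (cube d)) (v - ∑ α, w α) := by
  refine (tensorSpline_le_iSup_tensorSplineSub hm).trans (iSup_le fun α z hz => ?_)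
  have hresidual : v - ∑ β, w β = (v - w α) - ∑ β ∈ Finset.univ.erase α, w β := by
    rw [← Finset.add_sum_erase _ _ (Finset.mem_univ α), sub_add_eq_sub_sub]
  rw [hresidual, mem_l2Orthogonal_comm]
  refine Submodule.sub_mem _ ?_ (Submodule.sum_mem _ fun β hβ => ?_)
  · exact mem_l2Orthogonal_comm.1 ((hw α).mem_l2Orthogonal_sub hm hv hz)
  · exact tensorSplineSub_le_l2Orthogonal hm (Finset.ne_of_mem_erase hβ).symm hz (hw β).1

lemma eqOn_sum_proj (hm : 1 ≤ m)
    (hv : v ∈ TensorSpline d m p) (hw : ∀ α, IsL2ProjSub d m p α v (w α)) :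
    EqOn v (∑ α, w α) (cube d) := by
  have hmem : v - ∑ α, w α ∈ TensorSpline d m p :=
    Submodule.sub_mem _ hv <|
      Submodule.sum_mem _ fun α _ => tensorSplineSub_le_tensorSpline α (hw α).1
  have hzero : EqOn (v - ∑ α, w α) 0 (cube d) :=
    eqOn_zero_of_self_mem_l2Orthogonal (isOpen_cube d)
      (continuous_of_mem_tensorSpline hm hmem).continuousOn
      (tensorSpline_le_l2Orthogonal_sub_sum_proj hm hv hw hmem)
  exact fun x hx => sub_eq_zero.1 (hzero hx)

theorem aForm_le_two_pow_mul_sum_aForm_proj (hm : 1 ≤ m)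
    (hv : v ∈ TensorSpline d m p) (hw : ∀ α, IsL2ProjSub d m p α v (w α)) :
    aForm d v v ≤ 2 ^ d * ∑ α, aForm d (w α) (w α) := by
  have hsum := eqOn_sum_proj hm hv hw
  calc aForm d v v = aForm d (∑ α, w α) (∑ α, w α) := aForm_congr hsum hsum
    _ ≤ Fintype.card (Fin d → Bool) * ∑ α, aForm d (w α) (w α) :=
        aForm_sum_le_card_mul_sum fun α =>
          tensorSpline_le_classicalH1 hm (tensorSplineSub_le_tensorSpline α (hw α).1)
    _ = 2 ^ d * ∑ α, aForm d (w α) (w α) := by simp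

end TensorSplines

/-- Here `E α u` stands for `⟨L_α u, u⟩`. -/
theorem smoothing_property_subspace_correction_general {d m p : ℕ} (hm : 1 ≤ m) {c₁ : ℝ}
    {E : (Fin d → Bool) → ((Fin d → ℝ) → ℝ) → ℝ}
    (hE : ∀ α, ∀ u ∈ TensorSplineSub d m p α, aForm d u u ≤ c₁ * E α u)
    {v : (Fin d → ℝ) → ℝ} (hv : v ∈ TensorSpline d m p)
    {w : (Fin d → Bool) → (Fin d → ℝ) → ℝ} (hw : ∀ α, IsL2ProjSub d m p α v (w α)) :
    aForm d v v ≤ 2 ^ d * c₁ * ∑ α, E α (w α) := by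
  calc aForm d v v ≤ 2 ^ d * ∑ α, aForm d (w α) (w α) :=
        aForm_le_two_pow_mul_sum_aForm_proj hm hv hw
    _ ≤ 2 ^ d * ∑ α, c₁ * E α (w α) := by
        gcongr with α
        exact hE α _ (hw α).1
    _ = 2 ^ d * c₁ * ∑ α, E α (w α) := by rw [← Finset.mul_sum, mul_assoc]

/-- Lemma `lem:smoothing-prop`: if for every `α ∈ {0,1}^d` the
local smoother `L_α` (given here through its bilinear form `b α` on `S_α`, symmetric
and positive definite) satisfies `a(v_α, v_α) ≤ c₁·⟨L_α v_α, v_α⟩` for all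
`v_α ∈ S_α`, then the additive subspace correction smoother `L = Σ_α Q_α′ L_α Q_α`
satisfies `a(v,v) ≤ c·⟨Lv,v⟩ = c·Σ_α ⟨L_α Q_α v, Q_α v⟩` for all `v ∈ S^d`, where
`c` depends only on `c₁` and `d`, not on `h` or `p`. -/
theorem smoothing_property_subspace_correction :
    ∀ d : ℕ, 1 ≤ d → ∀ c₁ : ℝ, 0 < c₁ → ∃ c : ℝ, 0 < c ∧
      ∀ m p : ℕ, 1 ≤ m → 1 ≤ p →
      ∀ b : (Fin d → Bool) → ((Fin d → ℝ) → ℝ) → ((Fin d → ℝ) → ℝ) → ℝ,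
        (∀ α, ∀ u ∈ TensorSplineSub d m p α, ∀ v ∈ TensorSplineSub d m p α,
          b α u v = b α v u) →
        (∀ α, ∀ u ∈ TensorSplineSub d m p α, l2normSqD d u ≠ 0 → 0 < b α u u) →
        (∀ α, ∀ u ∈ TensorSplineSub d m p α, aForm d u u ≤ c₁ * b α u u) →
        ∀ v : (Fin d → ℝ) → ℝ, v ∈ TensorSpline d m p →
        ∀ vα : (Fin d → Bool) → (Fin d → ℝ) → ℝ,
          (∀ α, IsL2ProjSub d m p α v (vα α)) →
          aForm d v v ≤ c * ∑ α : Fin d → Bool, b α (vα α) (vα α) := by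
  intro d _ c₁ hc₁
  exact ⟨2 ^ d * c₁, by positivity, fun m p hm _ b _ _ hb v hv vα hproj =>
    smoothing_property_subspace_correction_general hm (E := fun α u => b α u u) hb hv hproj⟩

end SplineMG
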